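/- arXiv:1904.00272 — 4 statements merged into one kernel-verified Lean document; each statement's English description precedes it below -/
import Mathlib

section
/- Let n ≥ 0 and suppose Σ_{k=0}^∞ w(k)|h^{(n)}(k)|² = ∞. Then the only sequence f ∈ ℓ²_w with D_n f = 0 is f = 0; that is, the kernel of D_n in ℓ²_w is trivial. -/
/-- The difference operator `D_n` on sequences:
`(D_n f)(k) = β(k+n) f(k) − β(k) (μ(k+1)/μ(k)) f(k+1)`. -/
noncomputable def Dn (β μ : ℕ → ℂ) (n : ℕ) (f : ℕ → ℂ) (k : ℕ) : ℂ :=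
  β (k + n) * f k - β k * (μ (k + 1) / μ k) * f (k + 1)

/-- The formal kernel vector `h^{(n)}(k) = (∏_{i=0}^{n-1} β(k+i)) / μ(k)`. -/
noncomputable def hker (β μ : ℕ → ℂ) (n : ℕ) (k : ℕ) : ℂ :=
  (∏ i ∈ Finset.range n, β (k + i)) / μ k

/-- Membership in the weighted space `ℓ²_w`: `Σ_k w(k) |f(k)|² < ∞`. -/
def MemL2 (w : ℕ → ℝ) (f : ℕ → ℂ) : Prop :=
  Summable fun k => w k * ‖f k‖ ^ 2

/-! The equation `D_n f = 0` is a first-order recurrence with nonvanishing leading coefficient, so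
its solutions form the line spanned by `h^{(n)}`. A nonzero point of that line belongs to `ℓ²_w`
exactly when `h^{(n)}` does. -/

theorem prod_range_add_one_mul {M : Type*} [CommMonoid M] (β : ℕ → M) (n k : ℕ) :
    (∏ i ∈ Finset.range n, β (k + 1 + i)) * β k =
      (∏ i ∈ Finset.range n, β (k + i)) * β (k + n) := by
  rw [← Finset.prod_range_succ (fun i => β (k + i)), Finset.prod_range_succ']
  simp only [add_assoc, add_zero, add_comm 1]

theorem mul_apply_zero_eq_of_recurrence {R : Type*} [CommMonoidWithZero R] [IsCancelMulZero R]
    {a b f g : ℕ → R} (hb : ∀ k, b k ≠ 0) (hf : ∀ k, a k * f k = b k * f (k + 1))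
    (hg : ∀ k, a k * g k = b k * g (k + 1)) (k : ℕ) : f k * g 0 = f 0 * g k := by
  induction k with
  | zero => rfl
  | succ k ih =>
    apply mul_left_cancel₀ (hb k)
    calc b k * (f (k + 1) * g 0) = a k * (f k * g 0) := by rw [← mul_assoc, ← hf, mul_assoc]
      _ = f 0 * (a k * g k) := by rw [ih, mul_left_comm]
      _ = b k * (f 0 * g (k + 1)) := by rw [hg, mul_left_comm]

theorem memL2_smul_iff {w : ℕ → ℝ} {f : ℕ → ℂ} {c : ℂ} (hc : c ≠ 0) :
    MemL2 w (c • f) ↔ MemL2 w f := by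
  have hterm (k : ℕ) : w k * ‖(c • f) k‖ ^ 2 = ‖c‖ ^ 2 * (w k * ‖f k‖ ^ 2) := by
    rw [Pi.smul_apply, norm_smul]
    ring
  simp only [MemL2, hterm]
  exact summable_mul_left_iff (pow_ne_zero 2 (norm_ne_zero_iff.mpr hc))

section Kernel

variable {β μ : ℕ → ℂ}

theorem Dn_eq_zero_iff {n : ℕ} {f : ℕ → ℂ} :
    Dn β μ n f = 0 ↔ ∀ k, β (k + n) * f k = β k * (μ (k + 1) / μ k) * f (k + 1) := by
  simp only [funext_iff, Dn, Pi.zero_apply, sub_eq_zero]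

theorem hker_apply_ne_zero (hβ : ∀ k, β k ≠ 0) (hμ : ∀ k, μ k ≠ 0) (n k : ℕ) :
    hker β μ n k ≠ 0 :=
  div_ne_zero (Finset.prod_ne_zero_iff.mpr fun i _ => hβ (k + i)) (hμ k)

theorem Dn_hker (hμ : ∀ k, μ k ≠ 0) (n : ℕ) : Dn β μ n (hker β μ n) = 0 := by
  refine Dn_eq_zero_iff.mpr fun k => ?_
  have hshift := prod_range_add_one_mul β n k
  have hμk := hμ k
  have hμk' := hμ (k + 1)
  simp only [hker]
  field_simp
  linear_combination -hshift

theorem eq_smul_hker_of_Dn_eq_zero (hβ : ∀ k, β k ≠ 0) (hμ : ∀ k, μ k ≠ 0) {n : ℕ} {f : ℕ → ℂ}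
    (hf : Dn β μ n f = 0) : f = (f 0 / hker β μ n 0) • hker β μ n := by
  funext k
  have hcoeff (k : ℕ) : β k * (μ (k + 1) / μ k) ≠ 0 :=
    mul_ne_zero (hβ k) (div_ne_zero (hμ (k + 1)) (hμ k))
  have hprop : f k * hker β μ n 0 = f 0 * hker β μ n k :=
    mul_apply_zero_eq_of_recurrence hcoeff (Dn_eq_zero_iff.mp hf)
      (Dn_eq_zero_iff.mp (Dn_hker hμ n)) k
  rw [Pi.smul_apply, smul_eq_mul, div_mul_eq_mul_div,
    eq_div_iff (hker_apply_ne_zero hβ hμ n 0), hprop]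

theorem statement1_general (w : ℕ → ℝ) (hβ : ∀ k, β k ≠ 0) (hμ : ∀ k, μ k ≠ 0) (n : ℕ) :
    (∀ f : ℕ → ℂ, MemL2 w f → Dn β μ n f = 0 → f = 0) ↔ ¬ MemL2 w (hker β μ n) := by
  constructor
  · intro htriv hmem
    exact hker_apply_ne_zero hβ hμ n 0 (congrFun (htriv _ hmem (Dn_hker hμ n)) 0)
  · intro hdiv f hf hDf
    obtain ⟨c, rfl⟩ : ∃ c : ℂ, f = c • hker β μ n := ⟨_, eq_smul_hker_of_Dn_eq_zero hβ hμ hDf⟩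
    have hc : c = 0 := by
      by_contra hc
      exact hdiv ((memL2_smul_iff hc).mp hf)
    rw [hc, zero_smul]

end Kernel

/-- if `Σ_k w(k)|h^{(n)}(k)|² = ∞`, then the only `f ∈ ℓ²_w` with
`D_n f = 0` is `f = 0`, i.e., the kernel of `D_n` in `ℓ²_w` is trivial. -/
theorem statement1 (w : ℕ → ℝ) (hw : ∀ k, 0 < w k)
    (β μ : ℕ → ℂ) (hβ : ∀ k, β k ≠ 0) (hμ : ∀ k, μ k ≠ 0) (hμ0 : μ 0 = 1)
    (n : ℕ) (hdiv : ¬ MemL2 w (hker β μ n)) :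
    ∀ f : ℕ → ℂ, MemL2 w f → Dn β μ n f = 0 → f = 0 :=
  (statement1_general w hβ hμ n).mpr hdiv
end

section
/- Let n ≥ 0 and assume: (i) there is a constant M such that |∏_{i=0}^{m} β(k+i)| ≤ M |∏_{i=0}^{m} β(j+i)| for all k ≤ j and all m ≥ 0; (ii) there is c > 0 with |β(k)| ≥ c(1+k) for all k; (iii) Σ_{k=0}^∞ Σ_{j=0}^∞ (max(j,k)+1)^{−2} |μ(j)/μ(k)|² w(k)/w'(j) < ∞. Then the double series S_n = Σ_{k=0}^∞ Σ_{j=k}^∞ |(∏_{i=0}^{n−1} β(k+i))/(∏_{i=0}^{n} β(j+i))|² |μ(j)/μ(k)|² w(k)/w'(j) is finite; consequently the operator Q_n : ℓ²_{w'} → ℓ²_w defined by (Q_n g)(k) = Σ_{j=k}^∞ (∏_{i=0}^{n−1} β(k+i))/(∏_{i=0}^{n} β(j+i)) · (μ(j)/μ(k)) · g(j) is a Hilbert–Schmidt operator with ‖Q_n‖²_HS = S_n ≤ (M²/c²) Σ_{k=0}^∞ Σ_{j=k}^∞ (1+j+n)^{−2} |μ(j)/μ(k)|² w(k)/w'(j)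 < ∞. -/
/-- The integral kernel of the operator `Q_n`:
`K_n(k,j) = (∏_{i=0}^{n-1} β(k+i)) / (∏_{i=0}^{n} β(j+i)) · (μ(j)/μ(k))`. -/
noncomputable def Qker (β μ : ℕ → ℂ) (n : ℕ) (k j : ℕ) : ℂ :=
  (∏ i ∈ Finset.range n, β (k + i)) / (∏ i ∈ Finset.range (n + 1), β (j + i)) *
    (μ j / μ k)

/-- The Hilbert–Schmidt summand of `Q_n : ℓ²_{w'} → ℓ²_w` at `(k,j)` (zero off the
region `j ≥ k` where the kernel is supported). -/
noncomputable def HSterm (w w' : ℕ → ℝ) (β μ : ℕ → ℂ) (n : ℕ) (p : ℕ × ℕ) : ℝ :=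
  if p.1 ≤ p.2 then ‖Qker β μ n p.1 p.2‖ ^ 2 * (w p.1 / w' p.2) else 0

/-- The comparison summand `(1+j+n)^{-2} |μ(j)/μ(k)|² w(k)/w'(j)` on `j ≥ k`. -/
noncomputable def Bterm (w w' : ℕ → ℝ) (μ : ℕ → ℂ) (n : ℕ) (p : ℕ × ℕ) : ℝ :=
  if p.1 ≤ p.2 then ((1 + p.2 + n : ℝ))⁻¹ ^ 2 * ‖μ p.2 / μ p.1‖ ^ 2 * (w p.1 / w' p.2)
  else 0

/-!
For `k ≤ j`, monotonicity (i) applied to products of length `n` cancels all factors of the kernel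
except `β (j + n)`, so that `|K_n(k,j)| ≤ M / |β (j + n)| * |μ(j)/μ(k)|`. By (ii) this is at most
`(M / c) (1 + j + n)⁻¹ |μ(j)/μ(k)|`. Squaring compares `S_n` with the claimed majorant, which in
turn is dominated by the half `k ≤ j` of the series in (iii).
-/

theorem norm_prod_range_le_of_succ {R : Type*} [NormedCommRing R] [NormOneClass R] {β : ℕ → R}
    {M : ℝ} {k j : ℕ} (hj : β j ≠ 0)
    (hM : ∀ k j m : ℕ, k ≤ j →
      ‖∏ i ∈ Finset.range (m + 1), β (k + i)‖ ≤ M * ‖∏ i ∈ Finset.range (m + 1), β (j + i)‖)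
    (hkj : k ≤ j) (n : ℕ) :
    ‖∏ i ∈ Finset.range n, β (k + i)‖ ≤ M * ‖∏ i ∈ Finset.range n, β (j + i)‖ := by
  cases n with
  | zero =>
    -- The estimate for products of length one forces `1 ≤ M`.
    have hle : ‖β j‖ ≤ M * ‖β j‖ := by simpa using hM j j 0 le_rfl
    simpa using (le_mul_iff_one_le_left (norm_pos_iff.mpr hj)).mp hle
  | succ m => exact hM k j m hkj

section Kernel

variable {β : ℕ → ℂ} {M : ℝ} {n k j : ℕ}

theorem norm_Qker_le (μ : ℕ → ℂ) (hβ : ∏ i ∈ Finset.range n, β (j + i) ≠ 0)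
    (hprod : ‖∏ i ∈ Finset.range n, β (k + i)‖ ≤ M * ‖∏ i ∈ Finset.range n, β (j + i)‖) :
    ‖Qker β μ n k j‖ ≤ M / ‖β (j + n)‖ * ‖μ j / μ k‖ := by
  rw [Qker, norm_mul, norm_div, Finset.prod_range_succ, norm_mul, ← div_div]
  gcongr
  exact (div_le_iff₀ (norm_pos_iff.mpr hβ)).mpr hprod

theorem norm_Qker_le_of_le_norm (μ : ℕ → ℂ) {c : ℝ} (hc : 0 < c)
    (hβ : ∏ i ∈ Finset.range n, β (j + i) ≠ 0)
    (hprod : ‖∏ i ∈ Finset.range n, β (k + i)‖ ≤ M * ‖∏ i ∈ Finset.range n, β (j + i)‖)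
    (hlow : c * (1 + j + n) ≤ ‖β (j + n)‖) :
    ‖Qker β μ n k j‖ ≤ M / c * (1 + j + n : ℝ)⁻¹ * ‖μ j / μ k‖ := by
  have hM : 0 ≤ M :=
    nonneg_of_mul_nonneg_left ((norm_nonneg _).trans hprod) (norm_pos_iff.mpr hβ)
  calc ‖Qker β μ n k j‖ ≤ M / ‖β (j + n)‖ * ‖μ j / μ k‖ := norm_Qker_le μ hβ hprod
    _ ≤ M / (c * (1 + j + n)) * ‖μ j / μ k‖ := by gcongr
    _ = M / c * (1 + j + n : ℝ)⁻¹ * ‖μ j / μ k‖ := by rw [← div_div, div_eq_mul_inv (M / c)]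

end Kernel

section Summands

variable {w w' : ℕ → ℝ} {p : ℕ × ℕ}

theorem HSterm_nonneg (hw : 0 ≤ w p.1) (hw' : 0 ≤ w' p.2) (β μ : ℕ → ℂ) (n : ℕ) :
    0 ≤ HSterm w w' β μ n p := by
  unfold HSterm
  split_ifs <;> positivity

theorem Bterm_nonneg (hw : 0 ≤ w p.1) (hw' : 0 ≤ w' p.2) (μ : ℕ → ℂ) (n : ℕ) :
    0 ≤ Bterm w w' μ n p := by
  unfold Bterm
  split_ifs <;> positivity

theorem Bterm_antitone (hw : 0 ≤ w p.1) (hw' : 0 ≤ w' p.2) (μ : ℕ → ℂ) :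
    Antitone fun n => Bterm w w' μ n p := by
  intro m n hmn
  dsimp only [Bterm]
  split_ifs
  · gcongr
  · rfl

theorem Bterm_zero_le (hw : 0 ≤ w p.1) (hw' : 0 ≤ w' p.2) (μ : ℕ → ℂ) :
    Bterm w w' μ 0 p ≤
      ((max p.2 p.1 : ℝ) + 1)⁻¹ ^ 2 * ‖μ p.2 / μ p.1‖ ^ 2 * (w p.1 / w' p.2) := by
  unfold Bterm
  split_ifs with hkj
  · rw [max_eq_left (Nat.cast_le.mpr hkj), Nat.cast_zero, add_zero, add_comm (1 : ℝ)]
  · positivity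

theorem HSterm_le_mul_Bterm (hw : 0 ≤ w p.1) (hw' : 0 ≤ w' p.2) {β : ℕ → ℂ} (μ : ℕ → ℂ)
    {M c : ℝ} {n : ℕ} (hc : 0 < c) (hβ : ∏ i ∈ Finset.range n, β (p.2 + i) ≠ 0)
    (hprod : p.1 ≤ p.2 →
      ‖∏ i ∈ Finset.range n, β (p.1 + i)‖ ≤ M * ‖∏ i ∈ Finset.range n, β (p.2 + i)‖)
    (hlow : c * (1 + p.2 + n) ≤ ‖β (p.2 + n)‖) :
    HSterm w w' β μ n p ≤ M ^ 2 / c ^ 2 * Bterm w w' μ n p := by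
  unfold HSterm Bterm
  split_ifs with hkj
  · calc
      ‖Qker β μ n p.1 p.2‖ ^ 2 * (w p.1 / w' p.2)
        ≤ (M / c * (1 + p.2 + n : ℝ)⁻¹ * ‖μ p.2 / μ p.1‖) ^ 2 * (w p.1 / w' p.2) := by
          gcongr
          exact norm_Qker_le_of_le_norm μ hc hβ (hprod hkj) hlow
      _ = M ^ 2 / c ^ 2 *
            ((1 + p.2 + n : ℝ)⁻¹ ^ 2 * ‖μ p.2 / μ p.1‖ ^ 2 * (w p.1 / w' p.2)) := by ring
  · rw [mul_zero]

end Summands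

theorem statement2_general {w w' : ℕ → ℝ} (hw : ∀ k, 0 < w k) (hw' : ∀ k, 0 < w' k)
    {β μ : ℕ → ℂ} (hβ : ∀ k, β k ≠ 0) (_hμ : ∀ k, μ k ≠ 0) {M c : ℝ} (hc : 0 < c) {n : ℕ}
    (hprod : ∀ k j : ℕ, k ≤ j →
      ‖∏ i ∈ Finset.range n, β (k + i)‖ ≤ M * ‖∏ i ∈ Finset.range n, β (j + i)‖)
    (hβlow : ∀ k : ℕ, n ≤ k → c * (1 + k) ≤ ‖β k‖)
    (hsum : Summable (Bterm w w' μ 0)) :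
    Summable (HSterm w w' β μ n) ∧ Summable (Bterm w w' μ n) ∧
      ∑' p : ℕ × ℕ, HSterm w w' β μ n p ≤
        (M ^ 2 / c ^ 2) * ∑' p : ℕ × ℕ, Bterm w w' μ n p := by
  have hB : Summable (Bterm w w' μ n) := hsum.of_nonneg_of_le
    (fun p => Bterm_nonneg (hw p.1).le (hw' p.2).le μ n)
    (fun p => Bterm_antitone (hw p.1).le (hw' p.2).le μ n.zero_le)
  have hle (p : ℕ × ℕ) : HSterm w w' β μ n p ≤ M ^ 2 / c ^ 2 * Bterm w w' μ n p := by
    refine HSterm_le_mul_Bterm (hw p.1).le (hw' p.2).le μ hc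
      (Finset.prod_ne_zero_iff.mpr fun i _ => hβ _) (hprod p.1 p.2) ?_
    simpa only [Nat.cast_add, add_assoc] using hβlow (p.2 + n) (Nat.le_add_left n p.2)
  have hHS : Summable (HSterm w w' β μ n) := (hB.mul_left _).of_nonneg_of_le
    (fun p => HSterm_nonneg (hw p.1).le (hw' p.2).le β μ n) hle
  refine ⟨hHS, hB, ?_⟩
  rw [← tsum_mul_left]
  exact hHS.tsum_le_tsum hle (hB.mul_left _)

/-- under (i) the monotonicity estimate on products of `β`,
(ii) the lower bound `|β(k)| ≥ c(1+k)`, and (iii) summability of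
`(max(j,k)+1)^{-2}|μ(j)/μ(k)|² w(k)/w'(j)`, the double series
`S_n = Σ_{k} Σ_{j≥k} |K_n(k,j)|² w(k)/w'(j)` is finite, i.e., `Q_n` is
Hilbert–Schmidt, with `‖Q_n‖²_HS = S_n ≤ (M²/c²) Σ_k Σ_{j≥k} (1+j+n)^{-2}
|μ(j)/μ(k)|² w(k)/w'(j) < ∞`. -/
theorem statement2 (w w' : ℕ → ℝ) (hw : ∀ k, 0 < w k) (hw' : ∀ k, 0 < w' k)
    (β μ : ℕ → ℂ) (hβ : ∀ k, β k ≠ 0) (hμ : ∀ k, μ k ≠ 0) (hμ0 : μ 0 = 1)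
    (M c : ℝ) (hc : 0 < c)
    (hM : ∀ k j m : ℕ, k ≤ j →
      ‖∏ i ∈ Finset.range (m + 1), β (k + i)‖ ≤
        M * ‖∏ i ∈ Finset.range (m + 1), β (j + i)‖)
    (hβlow : ∀ k : ℕ, c * (1 + k) ≤ ‖β k‖)
    (hsum : Summable fun p : ℕ × ℕ =>
      ((max p.2 p.1 : ℝ) + 1)⁻¹ ^ 2 * ‖μ p.2 / μ p.1‖ ^ 2 * (w p.1 / w' p.2))
    (n : ℕ) :
    Summable (HSterm w w' β μ n) ∧ Summable (Bterm w w' μ n) ∧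
      ∑' p : ℕ × ℕ, HSterm w w' β μ n p ≤
        (M ^ 2 / c ^ 2) * ∑' p : ℕ × ℕ, Bterm w w' μ n p := by
  exact statement2_general hw hw' hβ hμ hc
    (fun k j hkj => norm_prod_range_le_of_succ (hβ j) hM hkj n) (fun k _ => hβlow k)
    (hsum.of_nonneg_of_le (fun p => Bterm_nonneg (hw p.1).le (hw' p.2).le μ 0)
      (fun p => Bterm_zero_le (hw p.1).le (hw' p.2).le μ))
end

section
/- Let m ≥ 1 and define (Q⁻_m g)(k) = Σ_{j=0}^{k} (∏_{i=j}^{j+m−2} β(i))/(∏_{i=k}^{k+m−1} β(i)) · (μ(j+m−1)/μ(k+m)) · g(j). Then Q⁻_m is a two-sided inverse of D⁻_m: D⁻_m(Q⁻_m g) = g for every sequence g, and Q⁻_m(D⁻_m f) = f for every sequence f. -/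
/-- The operator `D⁻_m` (the Fourier component `D_n` with `n = −m < 0`). -/
noncomputable def Dminus (β μ : ℕ → ℂ) (m : ℕ) (f : ℕ → ℂ) (k : ℕ) : ℂ :=
  β (k + m - 1) * (μ (k + m) / μ (k + m - 1)) * f k -
    (if k = 0 then 0 else β (k - 1) * f (k - 1))

/-- The operator `Q⁻_m`:
`(Q⁻_m g)(k) = Σ_{j=0}^{k} (∏_{i=j}^{j+m−2} β(i))/(∏_{i=k}^{k+m−1} β(i)) ·
(μ(j+m−1)/μ(k+m)) · g(j)` (for `m = 1` the numerator product is empty, hence `1`). -/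
noncomputable def Qminus (β μ : ℕ → ℂ) (m : ℕ) (g : ℕ → ℂ) (k : ℕ) : ℂ :=
  ∑ j ∈ Finset.range (k + 1),
    (∏ i ∈ Finset.Ico j (j + m - 1), β i) / (∏ i ∈ Finset.Ico k (k + m), β i) *
      (μ (j + m - 1) / μ (k + m)) * g j

/-!
Put `W_m(k) = β(k) ⋯ β(k + m - 1) μ(k + m)`. These weights act as integrating factors: since
`W_m(k) / W_{m-1}(k) = β(k + m - 1) μ(k + m) / μ(k + m - 1)` and
`W_m(k - 1) / W_{m-1}(k) = β(k - 1)`, one has `W_{m-1} · D⁻_m f = ∇ (W_m · f)` for the backward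
difference `∇`, while `W_m · Q⁻_m g = Σ (W_{m-1} · g)` for the partial sums `Σ`. As `∇` and `Σ` are
mutually inverse, so are `D⁻_m` and `Q⁻_m`.
-/

section Telescoping

variable {G : Type*} [AddCommGroup G]

/-- The backward difference of a sequence, with the convention that the sequence vanishes at `-1`,
which makes it inverse to `partialSum`. -/
def backwardDiff (f : ℕ → G) : ℕ → G
  | 0 => f 0
  | k + 1 => f (k + 1) - f k

/-- The sequence of partial sums `f 0 + ⋯ + f k`, last term included. -/
def partialSum (f : ℕ → G) (k : ℕ) : G :=
  ∑ j ∈ Finset.range (k + 1), f j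

lemma backwardDiff_partialSum (f : ℕ → G) : backwardDiff (partialSum f) = f := by
  funext k
  cases k with
  | zero => exact Finset.sum_range_one f
  | succ k => exact Finset.sum_range_succ_sub_sum f

lemma partialSum_backwardDiff (f : ℕ → G) : partialSum (backwardDiff f) = f := by
  funext k
  induction k with
  | zero => exact Finset.sum_range_one (backwardDiff f)
  | succ k ih =>
    calc partialSum (backwardDiff f) (k + 1)
        = partialSum (backwardDiff f) k + (f (k + 1) - f k) := Finset.sum_range_succ _ (k + 1)
      _ = f (k + 1) := by rw [ih, add_sub_cancel]

end Telescoping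

section CommMonoid

variable {M : Type*} [CommMonoid M] (β μ : ℕ → M) (m k : ℕ)

/-- The integrating factor `W_m(k) = β(k) ⋯ β(k + m - 1) μ(k + m)`, which turns `D⁻_m` into a
backward difference. -/
def integratingFactor : M :=
  (∏ i ∈ Finset.Ico k (k + m), β i) * μ (k + m)

lemma integratingFactor_succ_mul :
    integratingFactor β μ (m + 1) k * μ (k + m) =
      integratingFactor β μ m k * (β (k + m) * μ (k + m + 1)) := by
  rw [integratingFactor, integratingFactor, ← add_assoc,
    Finset.prod_Ico_succ_top (Nat.le_add_right k m)]
  ac_rfl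

lemma integratingFactor_succ :
    integratingFactor β μ (m + 1) k = β k * integratingFactor β μ m (k + 1) := by
  rw [integratingFactor, integratingFactor, add_right_comm k 1 m, ← add_assoc,
    Finset.prod_eq_prod_Ico_succ_bot (by lia : k < k + m + 1), mul_assoc]

end CommMonoid

lemma integratingFactor_ne_zero {M : Type*} [CommMonoidWithZero M] [NoZeroDivisors M]
    [Nontrivial M] {β μ : ℕ → M} (hβ : ∀ k, β k ≠ 0) (hμ : ∀ k, μ k ≠ 0) (m k : ℕ) :
    integratingFactor β μ m k ≠ 0 :=
  mul_ne_zero (Finset.prod_ne_zero_iff.2 fun i _ => hβ i) (hμ _)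

lemma integratingFactor_mul_injective {M : Type*} [CommMonoidWithZero M] [IsCancelMulZero M]
    [Nontrivial M] {β μ : ℕ → M} (hβ : ∀ k, β k ≠ 0) (hμ : ∀ k, μ k ≠ 0) (m : ℕ) :
    Function.Injective fun f : ℕ → M => integratingFactor β μ m * f := fun _ _ h =>
  funext fun k => mul_left_cancel₀ (integratingFactor_ne_zero hβ hμ m k) (congrFun h k)

lemma integratingFactor_mul_Dminus (β : ℕ → ℂ) {μ : ℕ → ℂ} (hμ : ∀ k, μ k ≠ 0) (m : ℕ)
    (f : ℕ → ℂ) :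
    integratingFactor β μ m * Dminus β μ (m + 1) f =
      backwardDiff (integratingFactor β μ (m + 1) * f) := by
  have leading_coeff (k : ℕ) :
      integratingFactor β μ m k * (β (k + m) * (μ (k + m + 1) / μ (k + m))) =
        integratingFactor β μ (m + 1) k := by
    rw [← mul_div_assoc, ← mul_div_assoc, div_eq_iff (hμ _), integratingFactor_succ_mul]
  funext k
  cases k with
  | zero =>
    calc integratingFactor β μ m 0 * Dminus β μ (m + 1) f 0
        = integratingFactor β μ m 0 * (β (0 + m) * (μ (0 + m + 1) / μ (0 + m))) * f 0 := by
          simp only [Dminus, ← add_assoc, Nat.add_sub_cancel, if_true, sub_zero, mul_assoc]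
      _ = integratingFactor β μ (m + 1) 0 * f 0 := by rw [leading_coeff]
  | succ k =>
    calc integratingFactor β μ m (k + 1) * Dminus β μ (m + 1) f (k + 1)
        = integratingFactor β μ m (k + 1) *
              (β (k + 1 + m) * (μ (k + 1 + m + 1) / μ (k + 1 + m))) * f (k + 1) -
            β k * integratingFactor β μ m (k + 1) * f k := by
          simp only [Dminus, ← add_assoc, Nat.add_sub_cancel, if_neg k.succ_ne_zero]
          ring
      _ = integratingFactor β μ (m + 1) (k + 1) * f (k + 1) -
            integratingFactor β μ (m + 1) k * f k := by
          rw [leading_coeff, ← integratingFactor_succ]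

lemma integratingFactor_mul_Qminus {β μ : ℕ → ℂ} (hβ : ∀ k, β k ≠ 0) (hμ : ∀ k, μ k ≠ 0)
    (m : ℕ) (g : ℕ → ℂ) :
    integratingFactor β μ (m + 1) * Qminus β μ (m + 1) g =
      partialSum (integratingFactor β μ m * g) := by
  have Qminus_eq_sum_div (k : ℕ) : Qminus β μ (m + 1) g k =
      ∑ j ∈ Finset.range (k + 1),
        integratingFactor β μ m j * g j / integratingFactor β μ (m + 1) k :=
    Finset.sum_congr rfl fun j _ => by
      rw [div_mul_div_comm, div_mul_eq_mul_div]
      -- the truncated `j + (m + 1) - 1` reduces to `j + m`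
      rfl
  funext k
  rw [Pi.mul_apply, Qminus_eq_sum_div, ← Finset.sum_div,
    mul_div_cancel₀ _ (integratingFactor_ne_zero hβ hμ (m + 1) k)]
  rfl

/-- for `m ≥ 1`, `Q⁻_m` is a two-sided inverse of `D⁻_m`:
`D⁻_m (Q⁻_m g) = g` for every sequence `g` and `Q⁻_m (D⁻_m f) = f` for every
sequence `f`. -/
theorem statement10 (β μ : ℕ → ℂ) (hβ : ∀ k, β k ≠ 0) (hμ : ∀ k, μ k ≠ 0)
    (hμ0 : μ 0 = 1) (m : ℕ) (hm : 1 ≤ m) :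
    (∀ g : ℕ → ℂ, Dminus β μ m (Qminus β μ m g) = g) ∧
    (∀ f : ℕ → ℂ, Qminus β μ m (Dminus β μ m f) = f) := by
  obtain ⟨n, rfl⟩ := Nat.exists_eq_add_of_le' hm
  constructor
  · intro g
    apply integratingFactor_mul_injective hβ hμ n
    calc integratingFactor β μ n * Dminus β μ (n + 1) (Qminus β μ (n + 1) g)
        = backwardDiff (integratingFactor β μ (n + 1) * Qminus β μ (n + 1) g) :=
          integratingFactor_mul_Dminus β hμ n _
      _ = backwardDiff (partialSum (integratingFactor β μ n * g)) := by
          rw [integratingFactor_mul_Qminus hβ hμ]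
      _ = integratingFactor β μ n * g := backwardDiff_partialSum _
  · intro f
    apply integratingFactor_mul_injective hβ hμ (n + 1)
    calc integratingFactor β μ (n + 1) * Qminus β μ (n + 1) (Dminus β μ (n + 1) f)
        = partialSum (integratingFactor β μ n * Dminus β μ (n + 1) f) :=
          integratingFactor_mul_Qminus hβ hμ n _
      _ = partialSum (backwardDiff (integratingFactor β μ (n + 1) * f)) := by
          rw [integratingFactor_mul_Dminus β hμ]
      _ = integratingFactor β μ (n + 1) * f := partialSum_backwardDiff _
end

section
/- (Theorem 3.1) Assume: (a) there is c > 0 with |β(k)| ≥ c(1+k) for all k; (b) |∏_{i=0}^{m} β(k+i)| ≤ M |∏_{i=0}^{m} β(j+i)| for all k ≤ j and all m ≥ 0; (c) Σ_{k=0}^∞ Σ_{j=0}^∞ (max(j,k)+1)^{−2} |μ(j)/μ(k)|² w(k)/w'(j) < ∞; (d) there exists N ≥ 0 such that Σ_{k=0}^∞ (1+k)^{2n} |μ(k)|^{−2} w(k) < ∞ for all n < N and = ∞ for all n ≥ N; (e) Σ_{k=0}^∞ |β(k) − β(k)μ(k+1)/μ(k)|² w'(k) < ∞. Let H_w be the Hilbert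 space of families f = (f_n)_{n∈ℤ} of sequences f_n : ℕ → ℂ with ‖f‖²_w = Σ_{n≥0} Σ_{k≥0} w(k)|f_n(k)|² + Σ_{n<0} Σ_{k≥0} w(k−n)|f_n(k)|² < ∞, and similarly H_{w'}. Let D : H_w ⊇ dom(D) → H_{w'} be the operator acting componentwise by (Df)_{n+1} = D_n f_n, where for n ≥ 0, (D_n f)(k) = β(k+n) f(k) − β(k)(μ(k+1)/μ(k)) f(k+1), and for n < 0, (D_n f)(k) = β(k−n−1)(μ(k−n)/μ(k−n−1)) f(k) − β(k−1) f(k−1), with dom(D) = {f ∈ H_w : Df ∈ H_{w'}}. Then D has a compact parametrix: there exists a compact operator Q : H_{w'} → H_w satisfying DQ = I on H_{w'}, and QD = I − C on dom(D), where C is a compact operator. -/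
/-- The weight of the GNS Hilbert space `H_w` at Fourier mode `n ∈ ℤ` and index
`k ∈ ℕ`: it is `w(k)` for `n ≥ 0` and `w(k−n) = w(k+|n|)` for `n < 0`. -/
noncomputable def Wt (w : ℕ → ℝ) (n : ℤ) (k : ℕ) : ℝ :=
  if 0 ≤ n then w k else w (k + (-n).toNat)

/-- The Dirac-type operator `D` acting componentwise on families
`f = (f_n)_{n ∈ ℤ}` of sequences by `(Df)_n = D_{n-1} f_{n-1}`, where for `m ≥ 0`
`(D_m f)(k) = β(k+m) f(k) − β(k)(μ(k+1)/μ(k)) f(k+1)`, and for `m < 0`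
`(D_m f)(k) = β(k−m−1)(μ(k−m)/μ(k−m−1)) f(k) − β(k−1) f(k−1)`. -/
noncomputable def Dop (β μ : ℕ → ℂ) (f : ℤ → ℕ → ℂ) (n : ℤ) (k : ℕ) : ℂ :=
  if 0 ≤ n - 1 then
    β (k + (n - 1).toNat) * f (n - 1) k - β k * (μ (k + 1) / μ k) * f (n - 1) (k + 1)
  else
    β (k + (1 - n).toNat - 1) * (μ (k + (1 - n).toNat) / μ (k + (1 - n).toNat - 1)) *
        f (n - 1) k -
      (if k = 0 then 0 else β (k - 1) * f (n - 1) (k - 1))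

/-- The Hilbert space `ℓ²(ℤ × ℕ)`; the weighted GNS space `H_w` is identified with
it isometrically, an element `f ∈ H_w` corresponding to
`φ(n,k) = √(Wt w n k) · f_n(k)`. -/
abbrev Ews : Type := lp (fun _ : ℤ × ℕ => ℂ) 2

/-- Recovering the family `f = (f_n)` from its weighted representative `φ`:
`f_n(k) = φ(n,k)/√(Wt w n k)`. -/
noncomputable def unrep (w : ℕ → ℝ) (φ : ℤ × ℕ → ℂ) (n : ℤ) (k : ℕ) : ℂ :=
  φ (n, k) / (Real.sqrt (Wt w n k) : ℂ)

/-!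
Multiplication by the gauge factors `β(k) ⋯ β(k+n-1) / μ(k)` (and their analogues in negative modes)
conjugates `D` to the plain difference operator `Dop 1 1`, which has the summation operators
`∑_{j ≥ k}` (modes `n ≥ 0`) and `∑_{j ≤ k}` (modes `n < 0`) as right inverses. Undoing the
conjugation, the kernel of the right inverse in mode `n` contains a ratio of products of the `β(i)`
that is bounded by (b) and one factor `1 / β(i)` that, by (a), gains `max(j,k) + 1 + |n|`. Hence (c)
makes each mode Hilbert–Schmidt, with norms tending to `0` as `|n| → ∞`, and the right inverse `Q₀`
is compact. The kernel of `D` is spanned by the gauge factors of modes `n ≥ 0` that are square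
summable; by (d) there are finitely many. If `P` is the orthogonal projection onto `ker D`, then
`Q = Q₀ - P Q₀` and `C = P` form the parametrix.
-/

section BlockOperator

open Filter Topology
open scoped lp ENNReal

variable {𝕜 M N I J : Type*} [RCLike 𝕜]

theorem hasSum_norm_sq (x : ℓ²(I, 𝕜)) : HasSum (fun i => ‖x i‖ ^ 2) (‖x‖ ^ 2) := by
  simpa using lp.hasSum_norm (p := 2) (by simp) x

theorem memℓp_two_iff_summable_norm_sq {f : I → 𝕜} :
    Memℓp f 2 ↔ Summable fun i => ‖f i‖ ^ 2 := by
  simpa using memℓp_gen_iff (p := 2) (f := f) (by simp)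

variable (𝕜) in
/-- The bilinear pairing `(x, y) ↦ ∑ j, x j * y j` of `ℓ²`. -/
noncomputable def sumMul (J : Type*) : ℓ²(J, 𝕜) →L[𝕜] ℓ²(J, 𝕜) →L[𝕜] 𝕜 :=
  lp.dualPairing 2 2 (fun _ => ContinuousLinearMap.mul 𝕜 𝕜) (K := 1) fun _ => by simp

theorem norm_sumMul_le (x y : ℓ²(J, 𝕜)) : ‖sumMul 𝕜 J x y‖ ≤ ‖x‖ * ‖y‖ := by
  have h : ‖sumMul 𝕜 J‖ ≤ 1 := lp.norm_dualPairing _ _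
  simpa using (sumMul 𝕜 J).le_of_opNorm₂_le_of_le h le_rfl le_rfl

theorem hasSum_sumMul (x y : ℓ²(J, 𝕜)) : HasSum (fun j => x j * y j) (sumMul 𝕜 J x y) := by
  refine Summable.hasSum (Summable.of_norm ?_)
  simpa only [norm_mul] using lp.summable_mul (by simpa using Real.HolderConjugate.two_two) x y

theorem sumMul_single_left [DecidableEq J] (j : J) (z : 𝕜) (y : ℓ²(J, 𝕜)) :
    sumMul 𝕜 J (lp.single 2 j z) y = z * y j := by
  refine (hasSum_sumMul _ y).unique ?_
  convert hasSum_ite_eq j (z * y j) using 2 with j'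
  by_cases h : j' = j
  · subst h; simp
  · simp [h]

/-- The `i`-th row of a square summable matrix. -/
noncomputable def row (i : I) : ℓ²(I × J, 𝕜) →ₗ[𝕜] ℓ²(J, 𝕜) where
  toFun x := ⟨fun j => x (i, j),
    memℓp_two_iff_summable_norm_sq.2 ((hasSum_norm_sq x).summable.prod_factor i)⟩
  map_add' _ _ := rfl
  map_smul' _ _ := rfl

@[simp]
theorem row_apply (i : I) (x : ℓ²(I × J, 𝕜)) (j : J) : row i x j = x (i, j) := rfl

theorem row_single [DecidableEq I] [DecidableEq J] (i : I) (q : I × J) (z : 𝕜) :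
    row i (lp.single 2 q z) = if i = q.1 then lp.single 2 q.2 z else 0 := by
  ext j
  split_ifs with h
  · simp [← h, lp.single_apply, Pi.single_apply, Prod.ext_iff]
  · simp [lp.single_apply, Prod.ext_iff, h]

theorem hasSum_norm_sq_row (x : ℓ²(I × J, 𝕜)) : HasSum (fun i => ‖row i x‖ ^ 2) (‖x‖ ^ 2) :=
  (hasSum_norm_sq x).prod_fiberwise fun i => hasSum_norm_sq (row i x)

theorem sum_norm_sq_sumMul_row_le (σ : M ↪ N) (b : ℓ^∞(M, ℓ²(I × J, 𝕜)))
    (g : ℓ²(N × J, 𝕜)) (s : Finset (M × I)) :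
    ∑ p ∈ s, ‖sumMul 𝕜 J (row p.2 (b p.1)) (row (σ p.1) g)‖ ^ 2 ≤ (‖b‖ * ‖g‖) ^ 2 := by
  classical
  calc ∑ p ∈ s, ‖sumMul 𝕜 J (row p.2 (b p.1)) (row (σ p.1) g)‖ ^ 2
      ≤ ∑ p ∈ s.image Prod.fst ×ˢ s.image Prod.snd,
          ‖row p.2 (b p.1)‖ ^ 2 * ‖row (σ p.1) g‖ ^ 2 := by
        refine (Finset.sum_le_sum fun p _ => ?_).trans
          (Finset.sum_le_sum_of_subset_of_nonneg s.subset_product fun _ _ _ => by positivity)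
        rw [← mul_pow]
        gcongr
        exact norm_sumMul_le _ _
    _ = ∑ m ∈ s.image Prod.fst,
          (∑ i ∈ s.image Prod.snd, ‖row i (b m)‖ ^ 2) * ‖row (σ m) g‖ ^ 2 := by
        simp only [Finset.sum_product, Finset.sum_mul]
    _ ≤ ∑ m ∈ s.image Prod.fst, ‖b‖ ^ 2 * ‖row (σ m) g‖ ^ 2 := by
        gcongr with m
        exact (sum_le_hasSum _ (fun _ _ => by positivity) (hasSum_norm_sq_row (b m))).trans
          (by gcongr; exact lp.norm_apply_le_norm ENNReal.top_ne_zero b m)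
    _ ≤ (‖b‖ * ‖g‖) ^ 2 := by
        rw [← Finset.mul_sum, mul_pow, ← Finset.sum_map _ σ fun n => ‖row n g‖ ^ 2]
        gcongr
        exact sum_le_hasSum _ (fun _ _ => by positivity) (hasSum_norm_sq_row g)

/-- The operator `(T_b g)(m, i) = ∑ j, b m (i, j) * g (σ m, j)` given by a bounded family `b` of
Hilbert–Schmidt matrices: the `m`-th matrix maps the `σ m`-th row of `g` to the `m`-th row of
`T_b g`. -/
noncomputable def blockOperator (σ : M ↪ N) :
    ℓ^∞(M, ℓ²(I × J, 𝕜)) →L[𝕜] ℓ²(N × J, 𝕜) →L[𝕜] ℓ²(M × I, 𝕜) :=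
  LinearMap.mkContinuous₂
    (LinearMap.mk₂ 𝕜
      (fun b g => ⟨fun p => sumMul 𝕜 J (row p.2 (b p.1)) (row (σ p.1) g),
        memℓp_gen' (by simpa using sum_norm_sq_sumMul_row_le σ b g)⟩)
      (fun _ _ _ => by ext; simp only [lp.coeFn_add, Pi.add_apply, map_add, add_apply])
      (fun _ _ _ => by ext; simp)
      (fun _ _ _ => by ext; simp only [map_add]; rfl)
      (fun _ _ _ => by ext; simp))
    1 fun b g => by
      refine lp.norm_le_of_forall_sum_le (by simp) (by positivity) fun s => ?_
      simpa using sum_norm_sq_sumMul_row_le σ b g s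

theorem blockOperator_apply (σ : M ↪ N) (b : ℓ^∞(M, ℓ²(I × J, 𝕜))) (g : ℓ²(N × J, 𝕜))
    (p : M × I) :
    blockOperator σ b g p = sumMul 𝕜 J (row p.2 (b p.1)) (row (σ p.1) g) := rfl

theorem hasSum_blockOperator (σ : M ↪ N) (b : ℓ^∞(M, ℓ²(I × J, 𝕜))) (g : ℓ²(N × J, 𝕜)) (m : M)
    (i : I) : HasSum (fun j => b m (i, j) * g (σ m, j)) (blockOperator σ b g (m, i)) :=
  hasSum_sumMul (row i (b m)) (row (σ m) g)

theorem isClosed_setOf_isCompactOperator_blockOperator (σ : M ↪ N) :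
    IsClosed {b : ℓ^∞(M, ℓ²(I × J, 𝕜)) | IsCompactOperator (blockOperator σ b)} :=
  isClosed_setOfPred_isCompactOperator.preimage (blockOperator (𝕜 := 𝕜) σ).continuous

theorem isCompactOperator_blockOperator_sum {ι : Type*} (σ : M ↪ N) (s : Finset ι)
    {b : ι → ℓ^∞(M, ℓ²(I × J, 𝕜))} (hb : ∀ i, IsCompactOperator (blockOperator σ (b i))) :
    IsCompactOperator (blockOperator σ (∑ i ∈ s, b i)) := by
  rw [map_sum]
  exact Finset.sum_induction (fun i => blockOperator σ (b i)) (fun T => IsCompactOperator T)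
    (fun _ _ => .add) isCompactOperator_zero fun i _ => hb i

theorem isCompactOperator_blockOperator_single_single [DecidableEq M] [DecidableEq I]
    [DecidableEq J] (σ : M ↪ N) (m : M) (q : I × J) (z : 𝕜) :
    IsCompactOperator (blockOperator σ
      (lp.single ∞ m (lp.single 2 q z) : ℓ^∞(M, ℓ²(I × J, 𝕜)))) := by
  have hrank : blockOperator σ (lp.single ∞ m (lp.single 2 q z) : ℓ^∞(M, ℓ²(I × J, 𝕜))) =
      lp.singleContinuousLinearMap 𝕜 (fun _ => 𝕜) 2 (m, q.1) ∘L
        (z • lp.evalCLM 𝕜 (fun _ => 𝕜) 2 (σ m, q.2)) := by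
    ext g ⟨m', i⟩
    rw [blockOperator_apply]
    by_cases hm : m' = m
    · subst hm
      by_cases hi : i = q.1 <;> simp [row_single, sumMul_single_left, hi, lp.evalCLM]
    · simp [hm]
  rw [hrank]
  exact (isCompactOperator_of_locallyCompactSpace_rng
    (lp.singleContinuousLinearMap 𝕜 (fun _ => 𝕜) 2 (m, q.1))).comp_clm _

theorem isCompactOperator_blockOperator_single [DecidableEq M] (σ : M ↪ N) (m : M)
    (a : ℓ²(I × J, 𝕜)) :
    IsCompactOperator (blockOperator σ (lp.single ∞ m a : ℓ^∞(M, ℓ²(I × J, 𝕜)))) := by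
  classical
  have hsum := (lp.hasSum_single ENNReal.ofNat_ne_top a).mapL
    (lp.singleContinuousLinearMap 𝕜 (fun _ : M => ℓ²(I × J, 𝕜)) ∞ m)
  exact (isClosed_setOf_isCompactOperator_blockOperator σ).mem_of_tendsto hsum
    (.of_forall fun s => isCompactOperator_blockOperator_sum σ s fun q =>
      isCompactOperator_blockOperator_single_single σ m q (a q))

theorem hasSum_single_of_tendsto_norm [DecidableEq M] {E : M → Type*}
    [∀ m, NormedAddCommGroup (E m)] {b : lp E ∞}
    (hb : Tendsto (fun m => ‖b m‖) cofinite (𝓝 0)) :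
    HasSum (fun m => lp.single ∞ m (b m)) b := by
  rw [HasSum, SummationFilter.unconditional_filter, Metric.tendsto_atTop]
  intro ε hε
  have hfin : {m | ¬ ‖b m‖ < ε / 2}.Finite := hb.eventually_lt_const (half_pos hε)
  refine ⟨hfin.toFinset, fun s hs => ?_⟩
  rw [dist_eq_norm]
  refine (lp.norm_le_of_forall_le (half_pos hε).le fun m => ?_).trans_lt (half_lt_self hε)
  have happ : (∑ i ∈ s, lp.single ∞ i (b i)) m = if m ∈ s then b m else 0 := by
    rw [lp.coeFn_sum, Finset.sum_apply]
    simp [lp.single_apply]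
  rw [lp.coeFn_sub, Pi.sub_apply, happ]
  split_ifs with hm
  · simpa using (half_pos hε).le
  · have : ‖b m‖ < ε / 2 := by
      by_contra h
      exact hm (hs (hfin.mem_toFinset.2 h))
    simpa using this.le

theorem isCompactOperator_blockOperator (σ : M ↪ N) {b : ℓ^∞(M, ℓ²(I × J, 𝕜))}
    (hb : Tendsto (fun m => ‖b m‖) cofinite (𝓝 0)) : IsCompactOperator (blockOperator σ b) := by
  classical
  exact (isClosed_setOf_isCompactOperator_blockOperator σ).mem_of_tendsto
    (hasSum_single_of_tendsto_norm hb)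
    (.of_forall fun s => isCompactOperator_blockOperator_sum σ s fun m =>
      isCompactOperator_blockOperator_single σ m (b m))

end BlockOperator

section Parametrix

variable {𝕜 E F V : Type*} [RCLike 𝕜] [NormedAddCommGroup E] [InnerProductSpace 𝕜 E]
  [NormedAddCommGroup F] [NormedSpace 𝕜 F] [AddCommGroup V] [Module 𝕜 V]

theorem isCompactOperator_starProjection (K : Submodule 𝕜 E) [FiniteDimensional 𝕜 K] :
    IsCompactOperator K.starProjection :=
  have : ProperSpace K := FiniteDimensional.proper_rclike 𝕜 K
  (isCompactOperator_of_locallyCompactSpace_rng K.subtypeL).comp_clm K.orthogonalProjectionOnto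

theorem exists_compact_parametrix (D : E →ₗ[𝕜] V) [FiniteDimensional 𝕜 D.ker] {ι : F → V}
    {Q₀ : F →L[𝕜] E} (hQ₀ : IsCompactOperator Q₀) (hDQ₀ : ∀ g, D (Q₀ g) = ι g) :
    ∃ (Q : F →L[𝕜] E) (C : E →L[𝕜] E), IsCompactOperator Q ∧ IsCompactOperator C ∧
      (∀ g, D (Q g) = ι g) ∧ ∀ φ ψ, ι ψ = D φ → Q ψ = φ - C φ := by
  let C := D.ker.starProjection
  have hDC : ∀ φ, D (C φ) = 0 := D.ker.starProjection_apply_mem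
  refine ⟨Q₀ - C ∘L Q₀, C, hQ₀.sub (hQ₀.clm_comp C), isCompactOperator_starProjection _,
    fun g => ?_, fun φ ψ hψ => ?_⟩
  · rw [sub_apply, map_sub, ContinuousLinearMap.comp_apply, hDC, sub_zero, hDQ₀]
  · have hker : Q₀ ψ - φ ∈ D.ker := by
      rw [LinearMap.mem_ker, map_sub, hDQ₀, hψ, sub_self]
    have hproj : C (Q₀ ψ) - C φ = Q₀ ψ - φ := by
      rw [← map_sub]
      exact Submodule.starProjection_eq_self_iff.2 hker
    rw [sub_apply, ContinuousLinearMap.comp_apply, sub_eq_sub_iff_sub_eq_sub, hproj]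

end Parametrix

section Weight

variable {w : ℕ → ℝ}

theorem Wt_eq (w : ℕ → ℝ) (n : ℤ) (k : ℕ) : Wt w n k = w (k + (-n).toNat) := by
  unfold Wt
  split_ifs with hn
  · rw [Int.toNat_of_nonpos (by omega), add_zero]
  · rfl

theorem Wt_pos (hw : ∀ k, 0 < w k) (n : ℤ) (k : ℕ) : 0 < Wt w n k := by
  rw [Wt_eq]
  exact hw _

theorem ofReal_sqrt_Wt_ne_zero (hw : ∀ k, 0 < w k) (n : ℤ) (k : ℕ) : (√(Wt w n k) : ℂ) ≠ 0 :=
  Complex.ofReal_ne_zero.2 (Real.sqrt_pos.2 (Wt_pos hw n k)).ne'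

theorem norm_sq_ofReal_sqrt_Wt (hw : ∀ k, 0 < w k) (n : ℤ) (k : ℕ) :
    ‖(√(Wt w n k) : ℂ)‖ ^ 2 = Wt w n k := by
  rw [Complex.norm_real, Real.norm_of_nonneg (Real.sqrt_nonneg _),
    Real.sq_sqrt (Wt_pos hw n k).le]

theorem sqrt_Wt_mul_unrep (hw : ∀ k, 0 < w k) (φ : ℤ × ℕ → ℂ) (n : ℤ) (k : ℕ) :
    √(Wt w n k) * unrep w φ n k = φ (n, k) :=
  mul_div_cancel₀ _ (ofReal_sqrt_Wt_ne_zero hw n k)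

end Weight

section DifferenceOperator

variable (β μ : ℕ → ℂ)

theorem eq_natCast_add_one_or_eq_neg_natCast (n : ℤ) :
    (∃ s : ℕ, n = (s : ℤ) + 1) ∨ ∃ t : ℕ, n = -(t : ℤ) := by
  rcases lt_or_ge 0 n with h | h
  · exact .inl ⟨(n - 1).toNat, by omega⟩
  · exact .inr ⟨(-n).toNat, by omega⟩

theorem Dop_natCast_add_one (f : ℤ → ℕ → ℂ) (s k : ℕ) :
    Dop β μ f ((s : ℤ) + 1) k =
      β (k + s) * f s k - β k * (μ (k + 1) / μ k) * f s (k + 1) := by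
  simp [Dop]

theorem Dop_neg_natCast (f : ℤ → ℕ → ℂ) (t k : ℕ) :
    Dop β μ f (-(t : ℤ)) k =
      β (k + t) * (μ (k + t + 1) / μ (k + t)) * f (Int.negSucc t) k -
        (if k = 0 then 0 else β (k - 1) * f (Int.negSucc t) (k - 1)) := by
  have h : (1 - -(t : ℤ)).toNat = t + 1 := by omega
  have h' : -(t : ℤ) - 1 = Int.negSucc t := by omega
  have h'' : k + (t + 1) - 1 = k + t := by omega
  rw [Dop, if_neg (by omega), h, h', h'', add_assoc]

/-- The operator `D`, defined on all of `H_w` with values in arbitrary families of sequences. -/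
noncomputable def diracOperator (w : ℕ → ℝ) : Ews →ₗ[ℂ] ℤ → ℕ → ℂ where
  toFun φ := Dop β μ (unrep w φ)
  map_add' φ ψ := by
    ext n k
    simp only [Dop, unrep, lp.coeFn_add, Pi.add_apply]
    split_ifs <;> ring
  map_smul' z φ := by
    ext n k
    simp only [Dop, unrep, lp.coeFn_smul, Pi.smul_apply, smul_eq_mul, RingHom.id_apply]
    split_ifs <;> ring

theorem diracOperator_apply (w : ℕ → ℝ) (φ : Ews) :
    diracOperator β μ w φ = Dop β μ (unrep w φ) := rfl

theorem Dop_one_negSucc_eq_zero {h : ℤ → ℕ → ℂ} (hh : Dop 1 1 h = 0) (t k : ℕ) :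
    h (Int.negSucc t) k = 0 := by
  have hD : ∀ k, Dop 1 1 h (-(t : ℤ)) k = 0 := fun k => congrFun₂ hh _ _
  induction k with
  | zero => simpa [Dop_neg_natCast] using hD 0
  | succ k ih => simpa [Dop_neg_natCast, ih] using hD (k + 1)

theorem Dop_one_natCast_eq {h : ℤ → ℕ → ℂ} (hh : Dop 1 1 h = 0) (s k : ℕ) : h s k = h s 0 := by
  induction k with
  | zero => rfl
  | succ k ih =>
    have hD : Dop 1 1 h ((s : ℤ) + 1) k = 0 := congrFun₂ hh _ _
    rw [← ih]
    exact (sub_eq_zero.1 (by simpa [Dop_natCast_add_one] using hD)).symm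

/-- The matrices of the summation operators `∑ j ≥ k` (in modes `m ≥ 0`) and `∑ j ≤ k` (in modes
`m < 0`), which invert the difference operator `Dop 1 1` from the right. -/
def summationKernel : ℤ → ℕ → ℕ → ℂ
  | Int.ofNat _, k, j => if k ≤ j then 1 else 0
  | Int.negSucc _, k, j => if j ≤ k then 1 else 0

theorem summationKernel_natCast (s k j : ℕ) :
    summationKernel s k j = if k ≤ j then 1 else 0 := rfl

theorem summationKernel_negSucc (t k j : ℕ) :
    summationKernel (Int.negSucc t) k j = if j ≤ k then 1 else 0 := rfl

theorem Dop_one_eq_of_hasSum {h x : ℤ → ℕ → ℂ}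
    (hh : ∀ m k, HasSum (fun j => summationKernel m k j * x (m + 1) j) (h m k)) :
    Dop 1 1 h = x := by
  ext n k
  have hdelta {f : ℕ → ℂ} {a : ℂ} (hf : HasSum f a) (h : ∀ j, f j = if j = k then x n k else 0) :
      a = x n k :=
    hf.unique (funext h ▸ hasSum_ite_eq k (x n k))
  rcases eq_natCast_add_one_or_eq_neg_natCast n with ⟨s, rfl⟩ | ⟨t, rfl⟩
  · rw [Dop_natCast_add_one]
    simp only [Pi.one_apply, div_one, one_mul]
    refine hdelta ((hh s k).sub (hh s (k + 1))) fun j => ?_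
    rw [summationKernel_natCast, summationKernel_natCast]
    rcases eq_or_ne j k with rfl | hj
    · simp
    · simp [hj, show k + 1 ≤ j ↔ k ≤ j by omega]
  · have hn : Int.negSucc t + 1 = -(t : ℤ) := by omega
    have hh' := hh (Int.negSucc t)
    rw [hn] at hh'
    rw [Dop_neg_natCast]
    simp only [Pi.one_apply, div_one, one_mul]
    rcases k with _ | k
    · refine hdelta ((hh' 0).sub hasSum_zero) fun j => ?_
      rcases j with _ | j <;> simp [summationKernel_negSucc]
    · refine hdelta ((hh' (k + 1)).sub (hh' k)) fun j => ?_
      rw [summationKernel_negSucc, summationKernel_negSucc]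
      rcases eq_or_ne j (k + 1) with rfl | hj
      · simp
      · simp [hj, show j ≤ k + 1 ↔ j ≤ k by omega]

end DifferenceOperator

section Gauge

variable {β μ : ℕ → ℂ}

/-- The product `β(k) β(k+1) ⋯ β(k+s-1)`. -/
def shiftProd (β : ℕ → ℂ) (s k : ℕ) : ℂ := ∏ i ∈ Finset.range s, β (k + i)

theorem shiftProd_succ (β : ℕ → ℂ) (s k : ℕ) :
    shiftProd β (s + 1) k = shiftProd β s k * β (k + s) :=
  Finset.prod_range_succ _ _

theorem shiftProd_succ' (β : ℕ → ℂ) (s k : ℕ) :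
    shiftProd β (s + 1) k = shiftProd β s (k + 1) * β k := by
  simp only [shiftProd, Finset.prod_range_succ', add_zero, add_assoc, add_comm 1]

theorem shiftProd_ne_zero (hβ : ∀ k, β k ≠ 0) (s k : ℕ) : shiftProd β s k ≠ 0 :=
  Finset.prod_ne_zero_iff.2 fun _ _ => hβ _

/-- The gauge factor conjugating `Dop β μ` to the plain difference operator `Dop 1 1`: it is
`β(k) ⋯ β(k+n-1) / μ(k)` in modes `n ≥ 0` and `1 / (β(k) ⋯ β(k+|n|-1) μ(k+|n|))` in modes
`n ≤ 0`. -/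
noncomputable def gaugeFactor (β μ : ℕ → ℂ) (n : ℤ) (k : ℕ) : ℂ :=
  shiftProd β n.toNat k / (shiftProd β (-n).toNat k * μ (k + (-n).toNat))

theorem gaugeFactor_natCast (β μ : ℕ → ℂ) (s k : ℕ) :
    gaugeFactor β μ s k = shiftProd β s k / μ k := by
  simp [gaugeFactor, shiftProd]

theorem gaugeFactor_neg_natCast (β μ : ℕ → ℂ) (t k : ℕ) :
    gaugeFactor β μ (-(t : ℤ)) k = (shiftProd β t k * μ (k + t))⁻¹ := by
  simp [gaugeFactor, shiftProd]

theorem gaugeFactor_negSucc (β μ : ℕ → ℂ) (t k : ℕ) :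
    gaugeFactor β μ (Int.negSucc t) k = (shiftProd β (t + 1) k * μ (k + t + 1))⁻¹ :=
  gaugeFactor_neg_natCast β μ (t + 1) k

theorem gaugeFactor_ne_zero (hβ : ∀ k, β k ≠ 0) (hμ : ∀ k, μ k ≠ 0) (n : ℤ) (k : ℕ) :
    gaugeFactor β μ n k ≠ 0 :=
  div_ne_zero (shiftProd_ne_zero hβ _ _) (mul_ne_zero (shiftProd_ne_zero hβ _ _) (hμ _))

theorem Dop_gaugeFactor_mul (hβ : ∀ k, β k ≠ 0) (hμ : ∀ k, μ k ≠ 0) (h : ℤ → ℕ → ℂ) :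
    Dop β μ (gaugeFactor β μ * h) = gaugeFactor β μ * Dop 1 1 h := by
  ext n k
  rcases eq_natCast_add_one_or_eq_neg_natCast n with ⟨s, rfl⟩ | ⟨t, rfl⟩
  · rw [Pi.mul_apply, Pi.mul_apply, ← Nat.cast_succ, gaugeFactor_natCast, Nat.cast_succ]
    simp only [Dop_natCast_add_one, Pi.mul_apply, gaugeFactor_natCast, Pi.one_apply,
      shiftProd_succ']
    have := hμ k
    have := hμ (k + 1)
    have hrec := (shiftProd_succ β s k).symm.trans (shiftProd_succ' β s k)
    field_simp
    linear_combination h s k * hrec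
  · have hP := shiftProd_ne_zero hβ t
    have h0 : β (k + t) * (μ (k + t + 1) / μ (k + t)) * gaugeFactor β μ (Int.negSucc t) k =
        gaugeFactor β μ (-(t : ℤ)) k := by
      rw [gaugeFactor_negSucc, gaugeFactor_neg_natCast, shiftProd_succ]
      have := hP k
      have := hμ (k + t)
      have := hμ (k + t + 1)
      have := hβ (k + t)
      field_simp
    simp only [Dop_neg_natCast, Pi.mul_apply, ← mul_assoc, h0, Pi.one_apply, div_one, one_mul,
      mul_sub]
    rcases k with _ | k
    · simp only [if_true, mul_zero]
    · have h1 : β k * gaugeFactor β μ (Int.negSucc t) k = gaugeFactor β μ (-(t : ℤ)) (k + 1) := by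
        rw [gaugeFactor_negSucc, gaugeFactor_neg_natCast, shiftProd_succ', add_right_comm k t 1]
        have := hP (k + 1)
        have := hμ (k + 1 + t)
        have := hβ k
        field_simp
      simp only [k.succ_ne_zero, if_false, Nat.add_sub_cancel, h1]

theorem exists_eq_gaugeFactor_mul (hβ : ∀ k, β k ≠ 0) (hμ : ∀ k, μ k ≠ 0) (f : ℤ → ℕ → ℂ) :
    ∃ h, f = gaugeFactor β μ * h :=
  ⟨fun n k => f n k / gaugeFactor β μ n k, by
    ext n k
    exact (mul_div_cancel₀ (f n k) (gaugeFactor_ne_zero hβ hμ n k)).symm⟩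

theorem Dop_one_eq_zero_of_Dop_gaugeFactor_mul_eq_zero (hβ : ∀ k, β k ≠ 0) (hμ : ∀ k, μ k ≠ 0)
    {h : ℤ → ℕ → ℂ} (hh : Dop β μ (gaugeFactor β μ * h) = 0) : Dop 1 1 h = 0 := by
  rw [Dop_gaugeFactor_mul hβ hμ] at hh
  ext n k
  exact (mul_eq_zero.1 (congrFun₂ hh n k)).resolve_left (gaugeFactor_ne_zero hβ hμ n k)

theorem ne_zero_of_mul_one_add_le_norm {c : ℝ} (hc : 0 < c)
    (hβlow : ∀ k : ℕ, c * (1 + k) ≤ ‖β k‖) (k : ℕ) : β k ≠ 0 :=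
  norm_pos_iff.1 ((mul_pos hc (by positivity)).trans_le (hβlow k))

theorem pow_le_norm_shiftProd {c : ℝ} (hc : 0 < c) (hβlow : ∀ k : ℕ, c * (1 + k) ≤ ‖β k‖)
    (s k : ℕ) : (c * (1 + k)) ^ s ≤ ‖shiftProd β s k‖ := by
  rw [shiftProd, norm_prod]
  calc (c * (1 + k)) ^ s = ∏ _i ∈ Finset.range s, c * (1 + (k : ℝ)) := by simp
    _ ≤ ∏ i ∈ Finset.range s, ‖β (k + i)‖ := by
      refine Finset.prod_le_prod (fun _ _ => by positivity) fun i _ => le_trans ?_ (hβlow _)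
      gcongr
      exact k.le_add_right i

theorem norm_shiftProd_div_le (hβ : ∀ k, β k ≠ 0) {M : ℝ}
    (hM : ∀ k j m : ℕ, k ≤ j →
      ‖∏ i ∈ Finset.range (m + 1), β (k + i)‖ ≤ M * ‖∏ i ∈ Finset.range (m + 1), β (j + i)‖)
    (s : ℕ) {k j : ℕ} (hkj : k ≤ j) : ‖shiftProd β s k / shiftProd β s j‖ ≤ M := by
  have hpos : ∀ s j, 0 < ‖shiftProd β s j‖ := fun s j => norm_pos_iff.2 (shiftProd_ne_zero hβ s j)
  rcases s with _ | s
  · have hM1 : 1 ≤ M := (le_mul_iff_one_le_left (hpos 1 0)).1 (hM 0 0 0 le_rfl)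
    simpa [shiftProd] using hM1
  · rw [norm_div, div_le_iff₀ (hpos _ _)]
    exact hM k j s hkj

end Gauge

section Kernel

variable {w : ℕ → ℝ} {β μ : ℕ → ℂ} {c : ℝ} {N : ℕ}

theorem not_summable_norm_sq_gaugeFactor (hw : ∀ k, 0 < w k) (hc : 0 < c)
    (hβlow : ∀ k : ℕ, c * (1 + k) ≤ ‖β k‖)
    (hN : ¬ Summable fun k : ℕ => (1 + (k : ℝ)) ^ (2 * N) * ‖μ k‖⁻¹ ^ 2 * w k)
    {s : ℕ} (hs : N ≤ s) : ¬ Summable fun k => ‖gaugeFactor β μ s k‖ ^ 2 * w k := by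
  refine fun h => hN ((h.mul_left ((c ^ s)⁻¹ ^ 2)).of_nonneg_of_le
    (fun k => mul_nonneg (by positivity) (hw k).le) fun k => ?_)
  have hlow : (1 + (k : ℝ)) ^ N ≤ (c ^ s)⁻¹ * ‖shiftProd β s k‖ := by
    rw [le_inv_mul_iff₀ (by positivity)]
    calc c ^ s * (1 + (k : ℝ)) ^ N ≤ c ^ s * (1 + (k : ℝ)) ^ s := by
          gcongr
          linarith [Nat.cast_nonneg (α := ℝ) k]
      _ = (c * (1 + k)) ^ s := (mul_pow _ _ _).symm
      _ ≤ _ := pow_le_norm_shiftProd hc hβlow s k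
  have hwk := (hw k).le
  rw [pow_mul', ← mul_pow, ← mul_assoc, ← mul_pow, gaugeFactor_natCast, norm_div, div_eq_mul_inv,
    ← mul_assoc]
  gcongr

theorem eq_zero_of_Dop_eq_zero (hw : ∀ k, 0 < w k) (hμ : ∀ k, μ k ≠ 0) (hc : 0 < c)
    (hβlow : ∀ k : ℕ, c * (1 + k) ≤ ‖β k‖)
    (hN : ¬ Summable fun k : ℕ => (1 + (k : ℝ)) ^ (2 * N) * ‖μ k‖⁻¹ ^ 2 * w k)
    {φ : Ews} (hφ : Dop β μ (unrep w φ) = 0) (h0 : ∀ s : ℕ, s < N → φ ((s : ℤ), 0) = 0) :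
    φ = 0 := by
  have hβ := ne_zero_of_mul_one_add_le_norm hc hβlow
  obtain ⟨h, hφh⟩ := exists_eq_gaugeFactor_mul hβ hμ (unrep w φ)
  rw [hφh] at hφ
  have hDh := Dop_one_eq_zero_of_Dop_gaugeFactor_mul_eq_zero hβ hμ hφ
  have hφ_eq : ∀ n k, φ (n, k) = √(Wt w n k) * (gaugeFactor β μ n k * h n k) := fun n k => by
    rw [← sqrt_Wt_mul_unrep hw φ, hφh]
    rfl
  have hpos (s : ℕ) : h s 0 = 0 := by
    rcases lt_or_ge s N with hs | hs
    · have hu := mul_ne_zero (ofReal_sqrt_Wt_ne_zero hw s 0) (gaugeFactor_ne_zero hβ hμ s 0)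
      have h00 := h0 s hs
      rw [hφ_eq, ← mul_assoc] at h00
      exact (mul_eq_zero.1 h00).resolve_left hu
    · by_contra hne
      have hφs : Summable fun k => ‖φ ((s : ℤ), k)‖ ^ 2 :=
        (hasSum_norm_sq φ).summable.prod_factor _
      refine not_summable_norm_sq_gaugeFactor hw hc hβlow hN hs
        ((summable_mul_right_iff (pow_ne_zero 2 (norm_ne_zero_iff.2 hne))).1
          (hφs.congr fun k => ?_))
      rw [hφ_eq, Dop_one_natCast_eq hDh, norm_mul, norm_mul, mul_pow, mul_pow,
        norm_sq_ofReal_sqrt_Wt hw, Wt_eq, Int.toNat_neg_natCast, add_zero, mul_comm (w k)]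
      ring
  ext ⟨n, k⟩
  have hnk : h n k = 0 := by
    rcases n with s | t
    · exact (Dop_one_natCast_eq hDh s k).trans (hpos s)
    · exact Dop_one_negSucc_eq_zero hDh t k
  rw [hφ_eq, hnk, mul_zero, mul_zero, lp.coeFn_zero, Pi.zero_apply]

theorem finiteDimensional_ker_diracOperator (hw : ∀ k, 0 < w k) (hμ : ∀ k, μ k ≠ 0) (hc : 0 < c)
    (hβlow : ∀ k : ℕ, c * (1 + k) ≤ ‖β k‖)
    (hN : ¬ Summable fun k : ℕ => (1 + (k : ℝ)) ^ (2 * N) * ‖μ k‖⁻¹ ^ 2 * w k) :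
    FiniteDimensional ℂ (diracOperator β μ w).ker := by
  let e : (diracOperator β μ w).ker →ₗ[ℂ] (Fin N → ℂ) :=
    LinearMap.pi fun s => (lp.evalCLM ℂ (fun _ : ℤ × ℕ => ℂ) 2 ((s : ℕ), 0)).toLinearMap ∘ₗ
      (diracOperator β μ w).ker.subtype
  refine .of_injective e ((injective_iff_map_eq_zero e).2 fun φ hφ => Subtype.ext ?_)
  exact eq_zero_of_Dop_eq_zero hw hμ hc hβlow hN φ.2 fun s hs => congrFun hφ ⟨s, hs⟩

end Kernel

section Estimates

open Filter Topology
open scoped lp ENNReal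

theorem div_add_sq_le_one {R x : ℝ} (hR : 0 ≤ R) (hx : 0 ≤ x) : (R / (R + x)) ^ 2 ≤ 1 :=
  pow_le_one₀ (by positivity) (div_le_one_of_le₀ (by linarith) (by positivity))

theorem tendsto_tsum_div_add_sq_mul {ι : Type*} {a R : ι → ℝ} (ha : Summable a)
    (hR : ∀ i, 0 ≤ R i) :
    Tendsto (fun x : ℝ => ∑' i, (R i / (R i + x)) ^ 2 * a i) atTop (𝓝 0) := by
  have hlim (i : ι) : Tendsto (fun x : ℝ => (R i / (R i + x)) ^ 2 * a i) atTop (𝓝 0) := by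
    have h := ((tendsto_atTop_add_const_left atTop (R i) tendsto_id).const_div_atTop (R i)).pow 2
    simpa using h.mul_const (a i)
  have hbound : ∀ᶠ x : ℝ in atTop, ∀ i, ‖(R i / (R i + x)) ^ 2 * a i‖ ≤ ‖a i‖ := by
    filter_upwards [eventually_ge_atTop 0] with x hx i
    rw [norm_mul, Real.norm_of_nonneg (sq_nonneg _)]
    exact mul_le_of_le_one_left (norm_nonneg _) (div_add_sq_le_one (hR i) hx)
  simpa using tendsto_tsum_of_dominated_convergence ha.norm hlim hbound

/-- The matrix, in Fourier mode `m`, of the right inverse of `Dop β μ` obtained by conjugating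
the summation operators with the gauge factors. -/
noncomputable def rightInverseKernel (β μ : ℕ → ℂ) (m : ℤ) (k j : ℕ) : ℂ :=
  summationKernel m k j * (gaugeFactor β μ m k / gaugeFactor β μ (m + 1) j)

/-- The matrix `rightInverseKernel` acting between the unweighted `ℓ²` representatives of
elements of `H_{w'}` and `H_w`. -/
noncomputable def weightedKernel (w w' : ℕ → ℝ) (β μ : ℕ → ℂ) (m : ℤ) (p : ℕ × ℕ) : ℂ :=
  √(Wt w m p.1) * rightInverseKernel β μ m p.1 p.2 / √(Wt w' (m + 1) p.2)

/-- The indices of the weights `w` and `w'` that `Wt w m` and `Wt w' (m + 1)` evaluate at a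
matrix entry `(k, j)`. -/
def weightIndex (m : ℤ) (p : ℕ × ℕ) : ℕ × ℕ := (p.1 + (-m).toNat, p.2 + (-(m + 1)).toNat)

theorem weightIndex_injective (m : ℤ) : Function.Injective (weightIndex m) :=
  (add_left_injective _).prodMap (add_left_injective _)

/-- The factor `max(j,k) + 1` of assumption (c) at the pair `q = (k, j)`. -/
def outerRadius (q : ℕ × ℕ) : ℝ := max (q.2 : ℝ) q.1 + 1

theorem outerRadius_pos (q : ℕ × ℕ) : 0 < outerRadius q := by
  unfold outerRadius
  positivity

/-- The summand of assumption (c) at the pair `q = (k, j)`. -/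
noncomputable def kernelMajorant (w w' : ℕ → ℝ) (μ : ℕ → ℂ) (q : ℕ × ℕ) : ℝ :=
  (outerRadius q)⁻¹ ^ 2 * ‖μ q.2 / μ q.1‖ ^ 2 * (w q.1 / w' q.2)

variable {w w' : ℕ → ℝ} {β μ : ℕ → ℂ} {c M : ℝ}

theorem rightInverseKernel_natCast (hβ : ∀ k, β k ≠ 0) (hμ : ∀ k, μ k ≠ 0) {s k j : ℕ}
    (hkj : k ≤ j) :
    rightInverseKernel β μ s k j =
      shiftProd β s k / shiftProd β s j * (μ j / μ k) / β (j + s) := by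
  rw [rightInverseKernel, summationKernel_natCast, if_pos hkj, one_mul, ← Nat.cast_succ,
    gaugeFactor_natCast, gaugeFactor_natCast, shiftProd_succ]
  have := hβ (j + s)
  have := hμ k
  have := hμ j
  have := shiftProd_ne_zero hβ s j
  field_simp

theorem rightInverseKernel_negSucc (hβ : ∀ k, β k ≠ 0) (hμ : ∀ k, μ k ≠ 0) {t k j : ℕ}
    (hjk : j ≤ k) :
    rightInverseKernel β μ (Int.negSucc t) k j =
      shiftProd β t j / shiftProd β t k * (μ (j + t) / μ (k + t + 1)) / β (k + t) := by
  have hn : Int.negSucc t + 1 = -(t : ℤ) := by omega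
  rw [rightInverseKernel, summationKernel_negSucc, if_pos hjk, one_mul, hn, gaugeFactor_negSucc,
    gaugeFactor_neg_natCast, shiftProd_succ]
  have := hβ (k + t)
  have := hμ (k + t + 1)
  have := hμ (j + t)
  have := shiftProd_ne_zero hβ t k
  have := shiftProd_ne_zero hβ t j
  field_simp

theorem norm_mul_div_le_of_le {a r b : ℂ} {y : ℝ} (hc : 0 < c) (hy : 0 < y) (ha : ‖a‖ ≤ M)
    (hb : c * y ≤ 3 * ‖b‖) : ‖a * r / b‖ ≤ 3 * (M / c) * ‖r‖ / y := by
  have hM : 0 ≤ M := (norm_nonneg a).trans ha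
  calc ‖a * r / b‖ = ‖a‖ * ‖r‖ / ‖b‖ := by rw [norm_div, norm_mul]
    _ ≤ M * ‖r‖ / (c * y / 3) := by
      gcongr
      linarith
    _ = 3 * (M / c) * ‖r‖ / y := by field_simp

theorem norm_rightInverseKernel_natCast_le (hμ : ∀ k, μ k ≠ 0) (hc : 0 < c)
    (hβlow : ∀ k : ℕ, c * (1 + k) ≤ ‖β k‖)
    (hM : ∀ s k j : ℕ, k ≤ j → ‖shiftProd β s k / shiftProd β s j‖ ≤ M) {s k j : ℕ}
    (hkj : k ≤ j) :
    ‖rightInverseKernel β μ s k j‖ ≤ 3 * (M / c) * ‖μ j / μ k‖ / (outerRadius (k, j) + s) := by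
  have hR : outerRadius (k, j) = j + 1 := by
    rw [outerRadius, max_eq_left (Nat.cast_le.2 hkj)]
  have hlow := hβlow (j + s)
  push_cast at hlow
  rw [rightInverseKernel_natCast (ne_zero_of_mul_one_add_le_norm hc hβlow) hμ hkj, hR]
  refine norm_mul_div_le_of_le hc (by positivity) (hM s k j hkj) ?_
  linarith [norm_nonneg (β (j + s))]

theorem norm_rightInverseKernel_negSucc_le (hμ : ∀ k, μ k ≠ 0) (hc : 0 < c)
    (hβlow : ∀ k : ℕ, c * (1 + k) ≤ ‖β k‖)
    (hM : ∀ s k j : ℕ, k ≤ j → ‖shiftProd β s k / shiftProd β s j‖ ≤ M) {t k j : ℕ}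
    (hjk : j ≤ k) :
    ‖rightInverseKernel β μ (Int.negSucc t) k j‖ ≤
      3 * (M / c) * ‖μ (j + t) / μ (k + t + 1)‖ /
        (outerRadius (k + t + 1, j + t) + (t + 1)) := by
  have hR : outerRadius (k + t + 1, j + t) = k + t + 2 := by
    rw [outerRadius, max_eq_right (Nat.cast_le.2 (by omega))]
    push_cast
    ring
  have hlow := hβlow (k + t)
  push_cast at hlow
  have hle : (k + t + 2 + (t + 1) : ℝ) ≤ 3 * (1 + (k + t)) := by
    linarith [Nat.cast_nonneg (α := ℝ) k, Nat.cast_nonneg (α := ℝ) t]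
  rw [rightInverseKernel_negSucc (ne_zero_of_mul_one_add_le_norm hc hβlow) hμ hjk, hR]
  refine norm_mul_div_le_of_le hc (by positivity) (hM t j k hjk) ?_
  linarith [mul_le_mul_of_nonneg_left hle hc.le]

theorem norm_rightInverseKernel_le (hμ : ∀ k, μ k ≠ 0) (hc : 0 < c)
    (hβlow : ∀ k : ℕ, c * (1 + k) ≤ ‖β k‖)
    (hM : ∀ s k j : ℕ, k ≤ j → ‖shiftProd β s k / shiftProd β s j‖ ≤ M)
    (m : ℤ) (p : ℕ × ℕ) :
    ‖rightInverseKernel β μ m p.1 p.2‖ ≤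
      3 * (M / c) * ‖μ (weightIndex m p).2 / μ (weightIndex m p).1‖ /
        (outerRadius (weightIndex m p) + |(m : ℝ)|) := by
  by_cases hzero : summationKernel m p.1 p.2 = 0
  · have hM0 : 0 ≤ M := (norm_nonneg _).trans (hM 0 0 0 le_rfl)
    have hR := outerRadius_pos (weightIndex m p)
    rw [rightInverseKernel, hzero, zero_mul, norm_zero]
    positivity
  obtain ⟨k, j⟩ := p
  rcases m with s | t
  · have hkj : k ≤ j := not_lt.1 fun h => hzero (if_neg h.not_ge)
    have hidx : weightIndex s (k, j) = (k, j) := by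
      ext <;> simp only [weightIndex] <;> omega
    rw [Int.ofNat_eq_natCast, hidx, Int.cast_natCast, Nat.abs_cast]
    exact norm_rightInverseKernel_natCast_le hμ hc hβlow hM hkj
  · have hjk : j ≤ k := not_lt.1 fun h => hzero (if_neg h.not_ge)
    have hidx : weightIndex (Int.negSucc t) (k, j) = (k + t + 1, j + t) := by
      ext <;> simp only [weightIndex] <;> omega
    have habs : |((Int.negSucc t : ℤ) : ℝ)| = t + 1 := by
      rw [Int.cast_negSucc, abs_neg, Nat.abs_cast, Nat.cast_succ]
    rw [hidx, habs]
    exact norm_rightInverseKernel_negSucc_le hμ hc hβlow hM hjk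

theorem norm_sq_weightedKernel_le (hw : ∀ k, 0 < w k) (hw' : ∀ k, 0 < w' k)
    (hμ : ∀ k, μ k ≠ 0) (hc : 0 < c) (hβlow : ∀ k : ℕ, c * (1 + k) ≤ ‖β k‖)
    (hM : ∀ s k j : ℕ, k ≤ j → ‖shiftProd β s k / shiftProd β s j‖ ≤ M)
    (m : ℤ) (p : ℕ × ℕ) :
    ‖weightedKernel w w' β μ m p‖ ^ 2 ≤ (3 * (M / c)) ^ 2 *
      ((outerRadius (weightIndex m p) / (outerRadius (weightIndex m p) + |(m : ℝ)|)) ^ 2 *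
        kernelMajorant w w' μ (weightIndex m p)) := by
  have hR := outerRadius_pos (weightIndex m p)
  have hK := norm_rightInverseKernel_le hμ hc hβlow hM m p
  have hwt : 0 < w (weightIndex m p).1 / w' (weightIndex m p).2 := div_pos (hw _) (hw' _)
  calc ‖weightedKernel w w' β μ m p‖ ^ 2
      = ‖rightInverseKernel β μ m p.1 p.2‖ ^ 2 *
          (w (weightIndex m p).1 / w' (weightIndex m p).2) := by
        rw [weightedKernel, norm_div, norm_mul, div_pow, mul_pow, norm_sq_ofReal_sqrt_Wt hw,
          norm_sq_ofReal_sqrt_Wt hw', Wt_eq, Wt_eq, mul_comm (w _), mul_div_assoc, weightIndex]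
    _ ≤ _ := mul_le_mul_of_nonneg_right (pow_le_pow_left₀ (norm_nonneg _) hK 2) hwt.le
    _ = _ := by
        rw [kernelMajorant]
        field_simp

theorem kernelMajorant_nonneg (hw : ∀ k, 0 < w k) (hw' : ∀ k, 0 < w' k) (q : ℕ × ℕ) :
    0 ≤ kernelMajorant w w' μ q :=
  mul_nonneg (by positivity) (div_pos (hw _) (hw' _)).le

theorem summable_div_add_sq_mul_kernelMajorant (hw : ∀ k, 0 < w k) (hw' : ∀ k, 0 < w' k)
    (hsum : Summable (kernelMajorant w w' μ)) {x : ℝ} (hx : 0 ≤ x) :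
    Summable fun q => (outerRadius q / (outerRadius q + x)) ^ 2 * kernelMajorant w w' μ q := by
  refine hsum.of_nonneg_of_le (fun q => mul_nonneg (sq_nonneg _) (kernelMajorant_nonneg hw hw' q))
    fun q => mul_le_of_le_one_left (kernelMajorant_nonneg hw hw' q)
      (div_add_sq_le_one (outerRadius_pos q).le hx)

theorem summable_norm_sq_weightedKernel_and_tsum_le (hw : ∀ k, 0 < w k) (hw' : ∀ k, 0 < w' k)
    (hμ : ∀ k, μ k ≠ 0) (hc : 0 < c) (hβlow : ∀ k : ℕ, c * (1 + k) ≤ ‖β k‖)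
    (hM : ∀ s k j : ℕ, k ≤ j → ‖shiftProd β s k / shiftProd β s j‖ ≤ M)
    (hsum : Summable (kernelMajorant w w' μ)) (m : ℤ) :
    (Summable fun p => ‖weightedKernel w w' β μ m p‖ ^ 2) ∧
      ∑' p, ‖weightedKernel w w' β μ m p‖ ^ 2 ≤ (3 * (M / c)) ^ 2 *
        ∑' q, (outerRadius q / (outerRadius q + |(m : ℝ)|)) ^ 2 * kernelMajorant w w' μ q := by
  have hle := norm_sq_weightedKernel_le hw hw' hμ hc hβlow hM m
  have hdamped := summable_div_add_sq_mul_kernelMajorant hw hw' hsum (abs_nonneg (m : ℝ))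
  have hcomp := (hdamped.comp_injective (weightIndex_injective m)).mul_left ((3 * (M / c)) ^ 2)
  have hsq := hcomp.of_nonneg_of_le (fun _ => sq_nonneg _) hle
  refine ⟨hsq, (hsq.tsum_le_tsum hle hcomp).trans ?_⟩
  rw [tsum_mul_left]
  exact mul_le_mul_of_nonneg_left (tsum_comp_le_tsum_of_inj hdamped
    (fun q => mul_nonneg (sq_nonneg _) (kernelMajorant_nonneg hw hw' q))
    (weightIndex_injective m)) (sq_nonneg _)

theorem exists_bounded_family_eq_weightedKernel (hw : ∀ k, 0 < w k) (hw' : ∀ k, 0 < w' k)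
    (hμ : ∀ k, μ k ≠ 0) (hc : 0 < c) (hβlow : ∀ k : ℕ, c * (1 + k) ≤ ‖β k‖)
    (hM : ∀ s k j : ℕ, k ≤ j → ‖shiftProd β s k / shiftProd β s j‖ ≤ M)
    (hsum : Summable (kernelMajorant w w' μ)) :
    ∃ b : ℓ^∞(ℤ, ℓ²(ℕ × ℕ, ℂ)), (∀ m p, b m p = weightedKernel w w' β μ m p) ∧
      Tendsto (fun m => ‖b m‖) cofinite (𝓝 0) := by
  have hK := summable_norm_sq_weightedKernel_and_tsum_le hw hw' hμ hc hβlow hM hsum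
  let block (m : ℤ) : ℓ²(ℕ × ℕ, ℂ) :=
    ⟨weightedKernel w w' β μ m, memℓp_two_iff_summable_norm_sq.2 (hK m).1⟩
  have hblock (m : ℤ) : ‖block m‖ ^ 2 ≤ (3 * (M / c)) ^ 2 *
      ∑' q, (outerRadius q / (outerRadius q + |(m : ℝ)|)) ^ 2 * kernelMajorant w w' μ q :=
    (hasSum_norm_sq (block m)).tsum_eq ▸ (hK m).2
  have habs : Tendsto (fun m : ℤ => |(m : ℝ)|) cofinite atTop :=
    tendsto_norm_cocompact_atTop.comp Int.tendsto_coe_cofinite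
  have hlim : Tendsto (fun m => ‖block m‖) cofinite (𝓝 0) := by
    have hdamped := (tendsto_tsum_div_add_sq_mul hsum fun q => (outerRadius_pos q).le).comp habs
    exact squeeze_zero (fun _ => norm_nonneg _) (fun m => Real.le_sqrt_of_sq_le (hblock m))
      (by simpa using (hdamped.const_mul ((3 * (M / c)) ^ 2)).sqrt)
  exact ⟨⟨block, memℓp_infty hlim.bddAbove_range_of_cofinite⟩, fun _ _ => rfl, hlim⟩

end Estimates

section RightInverse

open scoped lp ENNReal

variable {w w' : ℕ → ℝ} {β μ : ℕ → ℂ}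

theorem Dop_unrep_blockOperator (hw : ∀ k, 0 < w k) (hw' : ∀ k, 0 < w' k) (hβ : ∀ k, β k ≠ 0)
    (hμ : ∀ k, μ k ≠ 0) {b : ℓ^∞(ℤ, ℓ²(ℕ × ℕ, ℂ))}
    (hb : ∀ m p, b m p = weightedKernel w w' β μ m p) (g : Ews) :
    Dop β μ (unrep w (blockOperator (addRightEmbedding (1 : ℤ)) b g)) = unrep w' g := by
  obtain ⟨h, hh⟩ :=
    exists_eq_gaugeFactor_mul hβ hμ (unrep w (blockOperator (addRightEmbedding (1 : ℤ)) b g))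
  obtain ⟨x, hx⟩ := exists_eq_gaugeFactor_mul hβ hμ (unrep w' g)
  rw [hh, hx, Dop_gaugeFactor_mul hβ hμ]
  congr 1
  refine Dop_one_eq_of_hasSum fun m k => ?_
  have hwt := ofReal_sqrt_Wt_ne_zero hw m k
  have hu := gaugeFactor_ne_zero hβ hμ m k
  have hT : blockOperator (addRightEmbedding (1 : ℤ)) b g (m, k) =
      √(Wt w m k) * (gaugeFactor β μ m k * h m k) := by
    rw [← sqrt_Wt_mul_unrep hw (blockOperator (addRightEmbedding (1 : ℤ)) b g), hh]
    rfl
  have hterm (j : ℕ) : b m (k, j) * g (m + 1, j) =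
      √(Wt w m k) * (gaugeFactor β μ m k * (summationKernel m k j * x (m + 1) j)) := by
    have hwt' := ofReal_sqrt_Wt_ne_zero hw' (m + 1) j
    have hu' := gaugeFactor_ne_zero hβ hμ (m + 1) j
    rw [hb, weightedKernel, rightInverseKernel, ← sqrt_Wt_mul_unrep hw' g, hx, Pi.mul_apply,
      Pi.mul_apply]
    field_simp
  have hsum := hasSum_blockOperator (addRightEmbedding (1 : ℤ)) b g m k
  simp only [addRightEmbedding_apply, hterm] at hsum
  rw [hT] at hsum
  exact (hasSum_mul_left_iff hu).1 ((hasSum_mul_left_iff hwt).1 hsum)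

end RightInverse

theorem statement12_general (w w' : ℕ → ℝ) (hw : ∀ k, 0 < w k) (hw' : ∀ k, 0 < w' k)
    (β μ : ℕ → ℂ) (hμ : ∀ k, μ k ≠ 0)
    (c : ℝ) (hc : 0 < c) (hβlow : ∀ k : ℕ, c * (1 + k) ≤ ‖β k‖)
    (M : ℝ)
    (hM : ∀ k j m : ℕ, k ≤ j →
      ‖∏ i ∈ Finset.range (m + 1), β (k + i)‖ ≤
        M * ‖∏ i ∈ Finset.range (m + 1), β (j + i)‖)
    (hsum : Summable fun p : ℕ × ℕ =>
      ((max p.2 p.1 : ℝ) + 1)⁻¹ ^ 2 * ‖μ p.2 / μ p.1‖ ^ 2 * (w p.1 / w' p.2))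
    (N : ℕ)
    (hN : ¬ Summable fun k : ℕ => (1 + (k : ℝ)) ^ (2 * N) * ‖μ k‖⁻¹ ^ 2 * w k) :
    ∃ Q C : Ews →L[ℂ] Ews, IsCompactOperator Q ∧ IsCompactOperator C ∧
      (∀ g : Ews, ∀ p : ℤ × ℕ,
        (Real.sqrt (Wt w' p.1 p.2) : ℂ) * Dop β μ (unrep w (Q g)) p.1 p.2 = g p) ∧
      (∀ φ ψ : Ews,
        (∀ p : ℤ × ℕ,
          ψ p = (Real.sqrt (Wt w' p.1 p.2) : ℂ) * Dop β μ (unrep w φ) p.1 p.2) →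
        Q ψ = φ - C φ) := by
  have hβ := ne_zero_of_mul_one_add_le_norm hc hβlow
  obtain ⟨b, hb, hblim⟩ := exists_bounded_family_eq_weightedKernel hw hw' hμ hc hβlow
    (fun s _ _ => norm_shiftProd_div_le hβ hM s) hsum
  have := finiteDimensional_ker_diracOperator hw hμ hc hβlow hN
  obtain ⟨Q, C, hQ, hC, hDQ, hQD⟩ := exists_compact_parametrix (diracOperator β μ w)
    (isCompactOperator_blockOperator _ hblim) (Dop_unrep_blockOperator hw hw' hβ hμ hb)
  refine ⟨Q, C, hQ, hC, fun g p => ?_, fun φ ψ hψ => hQD φ ψ ?_⟩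
  · rw [← diracOperator_apply, hDQ, sqrt_Wt_mul_unrep hw']
  · ext n k
    rw [unrep, hψ, mul_div_cancel_left₀ _ (ofReal_sqrt_Wt_ne_zero hw' n k), diracOperator_apply]

/-- Theorem 3.1: under assumptions (a) `|β(k)| ≥ c(1+k)` with
`c > 0`; (b) `|∏_{i≤m} β(k+i)| ≤ M |∏_{i≤m} β(j+i)|` for `k ≤ j`;
(c) `Σ_{k,j} (max(j,k)+1)^{−2}|μ(j)/μ(k)|² w(k)/w'(j) < ∞`;
(d) there is `N ≥ 0` with `Σ_k (1+k)^{2n}|μ(k)|^{−2} w(k) < ∞` for `n < N` and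
`= ∞` for `n ≥ N`; and (e) `Σ_k |β(k) − β(k)μ(k+1)/μ(k)|² w'(k) < ∞`, the
operator `D : H_w ⊇ dom(D) → H_{w'}`, `(Df)_{n+1} = D_n f_n`, has a compact
parametrix: there is a compact `Q : H_{w'} → H_w` with `DQ = I` on `H_{w'}` and
`QD = I − C` on `dom(D) = {f ∈ H_w : Df ∈ H_{w'}}`, `C` compact.  Here `H_w` is
identified isometrically with `ℓ²(ℤ × ℕ)` via `φ(n,k) = √(Wt w n k) f_n(k)`. -/
theorem statement12 (w w' : ℕ → ℝ) (hw : ∀ k, 0 < w k) (hw' : ∀ k, 0 < w' k)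
    (hwsum : ∑' k : ℕ, w k = 1) (hw'sum : ∑' k : ℕ, w' k = 1)
    (β μ : ℕ → ℂ) (hβ : ∀ k, β k ≠ 0) (hμ : ∀ k, μ k ≠ 0) (hμ0 : μ 0 = 1)
    (c : ℝ) (hc : 0 < c) (hβlow : ∀ k : ℕ, c * (1 + k) ≤ ‖β k‖)
    (M : ℝ)
    (hM : ∀ k j m : ℕ, k ≤ j →
      ‖∏ i ∈ Finset.range (m + 1), β (k + i)‖ ≤
        M * ‖∏ i ∈ Finset.range (m + 1), β (j + i)‖)
    (hsum : Summable fun p : ℕ × ℕ =>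
      ((max p.2 p.1 : ℝ) + 1)⁻¹ ^ 2 * ‖μ p.2 / μ p.1‖ ^ 2 * (w p.1 / w' p.2))
    (N : ℕ)
    (hN : ∀ n : ℕ,
      (n < N → Summable fun k : ℕ => (1 + (k : ℝ)) ^ (2 * n) * ‖μ k‖⁻¹ ^ 2 * w k) ∧
      (N ≤ n → ¬ Summable fun k : ℕ => (1 + (k : ℝ)) ^ (2 * n) * ‖μ k‖⁻¹ ^ 2 * w k))
    (hcov : Summable fun k : ℕ => ‖β k - β k * (μ (k + 1) / μ k)‖ ^ 2 * w' k) :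
    ∃ Q C : Ews →L[ℂ] Ews, IsCompactOperator Q ∧ IsCompactOperator C ∧
      -- `DQ = I` on `H_{w'}`:
      (∀ g : Ews, ∀ p : ℤ × ℕ,
        (Real.sqrt (Wt w' p.1 p.2) : ℂ) * Dop β μ (unrep w (Q g)) p.1 p.2 = g p) ∧
      -- `QD = I − C` on the maximal domain of `D`: if `φ ∈ H_w` and its image
      -- under `D` is represented by some `ψ ∈ H_{w'}`, then `Q ψ = φ − C φ`.
      (∀ φ ψ : Ews,
        (∀ p : ℤ × ℕ,
          ψ p = (Real.sqrt (Wt w' p.1 p.2) : ℂ) * Dop β μ (unrep w φ) p.1 p.2) →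
        Q ψ = φ - C φ) := by
  exact statement12_general w w' hw hw' β μ hμ c hc hβlow M hM hsum N ((hN N).2 le_rfl)
end
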